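/- Let ρ be a weight on L(G), let M ≥ 1 and w ∈ ℝ, and let p = 1. The following are equivalent: (i) for every t ≥ 0 the left translation T_t defines a bounded linear operator on L^1_ρ(L(G)), the family {T_t}_{t≥0} is a C₀-semigroup on L^1_ρ(L(G)), and ‖T_t‖ ≤ M e^{wt} for all t ≥ 0; (ii) for all i ∈ I, all t ≥ 0, and almost every s ∈ [0,1], one has ρ_i(s) ≤ M e^{wt} · inf_{j∈M_{n(t,s)}(i)} ρ_j(s+t−n(t,s)), where the infimum over the empty set is +∞. -/

import Mathlib

open MeasureTheory ENNReal Filter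

noncomputable section

variable {I : Type*}

/-- The `n`-fold iterate of the parent map `P : I → Option I` of a directed metric tree,
encoded on the set of edges `I`. -/
def pIter (P : I → Option I) : ℕ → I → Option I
  | 0, j => some j
  | n + 1, j => (P j).bind (pIter P n)

/-- `Mset P n i` is the set of edges reachable from the edge `i` in `n` steps,
i.e. `M_n(i) = {j | P^[n] j = some i}`; `Mset P 0 i = {i}`. -/
def Mset (P : I → Option I) (n : ℕ) (i : I) : Set I := {j | pIter P n j = some i}

/-- `nfl t s = ⌊s + t⌋ ∈ ℕ`. -/
def nfl (t s : ℝ) : ℕ := ⌊s + t⌋₊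

/-- The left translation `T_t` on families of functions on the edges:
`(T_t f)_i (s) = ∑_{j ∈ M_{n(t,s)}(i)} f_j (t + s - n(t,s))`. -/
def Tleft (P : I → Option I) (f : I → ℝ → ℝ) (t : ℝ) (i : I) (s : ℝ) : ℝ :=
  ∑' j : Mset P (nfl t s) i, f (j : I) (t + s - (nfl t s : ℝ))

/-- The `p`-th power of the norm of a family `f` in `L^p_ρ(L(G))`:
`‖f‖_{p,ρ}^p = ∑_{i ∈ I} ∫_0^1 |f_i(s)|^p ρ_i(s) ds`, with values in `[0,∞]`. -/
def pnorm (ρ : I → ℝ → ℝ) (p : ℝ) (f : I → ℝ → ℝ) : ℝ≥0∞ :=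
  ∑' i, ∫⁻ s in Set.Icc (0 : ℝ) 1, ENNReal.ofReal (|f i s| ^ p * ρ i s)

/-- Membership in `L^p_ρ(L(G))`: each component is (a.e.) measurable on `[0,1]` and the
`ℓ^p`-direct sum norm is finite. -/
def memLprho (ρ : I → ℝ → ℝ) (p : ℝ) (f : I → ℝ → ℝ) : Prop :=
  (∀ i, AEMeasurable (f i) (volume.restrict (Set.Icc (0 : ℝ) 1))) ∧ pnorm ρ p f < ⊤

/-- The norm `‖f‖_{p,ρ}` in `L^p_ρ(L(G))`, with values in `[0,∞]`. -/
def enorm' (ρ : I → ℝ → ℝ) (p : ℝ) (f : I → ℝ → ℝ) : ℝ≥0∞ := pnorm ρ p f ^ (1 / p)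

/-- The distance `‖f - g‖_{p,ρ}` in `L^p_ρ(L(G))`, with values in `[0,∞]`. -/
def pdist (ρ : I → ℝ → ℝ) (p : ℝ) (f g : I → ℝ → ℝ) : ℝ≥0∞ :=
  enorm' ρ p fun i s => f i s - g i s

/-- A weight on `L(G)`: a family of integrable functions on `[0,1]`, strictly positive a.e. -/
structure IsWeight (ρ : I → ℝ → ℝ) : Prop where
  integrable : ∀ i, IntegrableOn (ρ i) (Set.Icc (0 : ℝ) 1)
  pos : ∀ i, ∀ᵐ s ∂(volume.restrict (Set.Icc (0 : ℝ) 1)), 0 < ρ i s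

/-- The `1`-admissibility condition (everywhere on `[0,1]`) with constants `M, w`:
`ρ_i(s) ≤ M e^{wt} inf_{j ∈ M_{n(t,s)}(i)} ρ_j(s+t-n(t,s))`, the infimum (in `[0,∞]`)
over the empty set being `+∞`. -/
def Admissible1 (P : I → Option I) (ρ : I → ℝ → ℝ) (M w : ℝ) : Prop :=
  ∀ i, ∀ t ≥ (0 : ℝ), ∀ s ∈ Set.Icc (0 : ℝ) 1,
    ENNReal.ofReal (ρ i s) ≤ ENNReal.ofReal (M * Real.exp (w * t)) *
      ⨅ j : Mset P (nfl t s) i, ENNReal.ofReal (ρ (j : I) (s + t - (nfl t s : ℝ)))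

/-- The `p`-admissibility condition (`1 < p < ∞`, everywhere on `[0,1]`) with constants `M, w`:
`(∑_{j ∈ M_{n(t,s)}(i)} ρ_j(s+t-n(t,s))^{-1/(p-1)})^{p-1} ≤ M^p e^{pwt} / ρ_i(s)`,
the sum being taken in `[0,∞]`. -/
def AdmissibleP (P : I → Option I) (ρ : I → ℝ → ℝ) (p M w : ℝ) : Prop :=
  ∀ i, ∀ t ≥ (0 : ℝ), ∀ s ∈ Set.Icc (0 : ℝ) 1,
    (∑' j : Mset P (nfl t s) i,
        ENNReal.ofReal ((ρ (j : I) (s + t - (nfl t s : ℝ))) ^ (-(1 / (p - 1))))) ^ (p - 1)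
      ≤ ENNReal.ofReal (M ^ p * Real.exp (p * w * t) / ρ i s)

/-- `p`-admissibility, `1 ≤ p < ∞`. -/
def Admissible (P : I → Option I) (ρ : I → ℝ → ℝ) (p M w : ℝ) : Prop :=
  (p = 1 → Admissible1 P ρ M w) ∧ (1 < p → AdmissibleP P ρ p M w)

/-- The family of left translations `{T_t}_{t ≥ 0}` consists of bounded (linear) operators on
`L^p_ρ(L(G))` with `‖T_t‖ ≤ M e^{wt}`, and is a `C₀`-semigroup there: `T_0 = Id`,
`T_{t+u} = T_t ∘ T_u`, and `t ↦ T_t f` is continuous on `[0,∞)` for every `f`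
(identities and continuity taken in the `L^p_ρ`-(semi)metric). -/
def C0SemigroupBound (P : I → Option I) (ρ : I → ℝ → ℝ) (p M w : ℝ) : Prop :=
  (∀ t ≥ (0 : ℝ), ∀ f, memLprho ρ p f → memLprho ρ p (Tleft P f t)) ∧
  (∀ t ≥ (0 : ℝ), ∀ f, memLprho ρ p f →
      enorm' ρ p (Tleft P f t) ≤ ENNReal.ofReal (M * Real.exp (w * t)) * enorm' ρ p f) ∧
  (∀ f, memLprho ρ p f → pdist ρ p (Tleft P f 0) f = 0) ∧
  (∀ t ≥ (0 : ℝ), ∀ u ≥ (0 : ℝ), ∀ f, memLprho ρ p f →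
      pdist ρ p (Tleft P f (t + u)) (Tleft P (Tleft P f u) t) = 0) ∧
  (∀ f, memLprho ρ p f → ∀ t ≥ (0 : ℝ),
      Filter.Tendsto (fun u => pdist ρ p (Tleft P f u) (Tleft P f t))
        (nhdsWithin t (Set.Ici 0)) (nhds 0))

/-!
Regard a family `f` as a function on the tree, that is, on `I × ℝ` with the measure `ρ_i(s) ds`.
The edge `j` contributes to `T_t f` only at its unique ancestor of the appropriate generation, and
`s ↦ s + t - ⌊s + t⌋` preserves Lebesgue measure on `[0,1]`. Hence, for `f ≥ 0` living on `j`,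
`‖T_t f‖` is the integral of `f_j (s + t - ⌊s + t⌋)` against the weight of that ancestor at `s`,
whereas `‖f‖` is its integral against `ρ_j (s + t - ⌊s + t⌋)`. So `‖T_t‖ ≤ C` holds iff the former
weight is almost everywhere at most `C` times the latter, which is the admissibility condition.
Strong continuity follows from the local boundedness of `M e^{wt}` by density: for `f` continuous
with compact support it is dominated convergence, since such an `f` lives on finitely many edges.
-/

open Function (uncurry curry)
open scoped Topology NNReal

section UnitInterval

/-- Lebesgue measure on `[0,1]`, the measure with which every edge is parametrised. -/
abbrev unitLebesgue : Measure ℝ := volume.restrict (Set.Icc (0 : ℝ) 1)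

lemma ae_unitLebesgue_mem_Ico : ∀ᵐ s ∂unitLebesgue, s ∈ Set.Ico (0 : ℝ) 1 := by
  rw [unitLebesgue, ← restrict_Ico_eq_restrict_Icc]
  exact ae_restrict_mem measurableSet_Ico

lemma map_fract_restrict_Ioc (t : ℝ) :
    (volume.restrict (Set.Ioc t (t + 1))).map Int.fract = unitLebesgue := by
  ext A hA
  have hA' : MeasurableSet (Int.fract ⁻¹' A : Set ℝ) := measurable_fract hA
  have hperiodic : ∀ g : AddSubgroup.zmultiples (1 : ℝ),
      (fun x : ℝ => g +ᵥ x) ⁻¹' (Int.fract ⁻¹' A) = Int.fract ⁻¹' A := by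
    rintro ⟨_, k, rfl⟩
    ext x
    simp [AddSubgroup.mk_vadd]
  have hfund := (isAddFundamentalDomain_Ioc one_pos t volume).measure_set_eq
    (isAddFundamentalDomain_Ioc one_pos 0 volume) hA' hperiodic
  rw [Measure.map_apply measurable_fract hA, Measure.restrict_apply hA', hfund, zero_add,
    ← Measure.restrict_apply hA', restrict_Ioc_eq_restrict_Icc]
  refine measure_congr (Filter.eventuallyEq_set.2 ?_)
  filter_upwards [ae_unitLebesgue_mem_Ico] with s hs
  rw [Set.mem_preimage, Int.fract_eq_self.2 hs]

lemma measurePreserving_fract_add (t : ℝ) :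
    MeasurePreserving (fun s => Int.fract (t + s)) unitLebesgue unitLebesgue := by
  have hadd : MeasurePreserving (fun s => t + s) unitLebesgue
      (volume.restrict (Set.Ioc t (t + 1))) := by
    have := (measurePreserving_add_left volume t).restrict_preimage
      (measurableSet_Ioc (a := t) (b := t + 1))
    rwa [Set.preimage_const_add_Ioc, sub_self, add_sub_cancel_left,
      restrict_Ioc_eq_restrict_Icc] at this
  exact MeasurePreserving.comp ⟨measurable_fract, map_fract_restrict_Ioc t⟩ hadd

/-- The position `s + t - ⌊s + t⌋` on its edge of the point at distance `t` from position `s`. -/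
def edgePos (t s : ℝ) : ℝ := t + s - nfl t s

lemma edgePos_eq_fract {t s : ℝ} (h : 0 ≤ s + t) : edgePos t s = Int.fract (t + s) := by
  rw [edgePos, nfl, natCast_floor_eq_intCast_floor h, add_comm t s, Int.self_sub_floor]

lemma measurable_nfl (t : ℝ) : Measurable (nfl t) :=
  Nat.measurable_floor.comp (measurable_id.add_const t)

lemma measurePreserving_edgePos {t : ℝ} (ht : 0 ≤ t) :
    MeasurePreserving (edgePos t) unitLebesgue unitLebesgue := by
  refine (measurePreserving_fract_add t).congr ?_ ?_
  · exact (measurable_const_add t).sub (measurable_from_nat.comp (measurable_nfl t))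
  · filter_upwards [ae_unitLebesgue_mem_Ico] with s hs
    exact (edgePos_eq_fract (add_nonneg hs.1 ht)).symm

lemma lintegral_comp_edgePos {t : ℝ} (ht : 0 ≤ t) {f : ℝ → ℝ≥0∞}
    (hf : AEMeasurable f unitLebesgue) :
    ∫⁻ s, f (edgePos t s) ∂unitLebesgue = ∫⁻ s, f s ∂unitLebesgue := by
  have hmp := measurePreserving_edgePos ht
  rw [← lintegral_map' (hmp.map_eq.symm ▸ hf) hmp.aemeasurable, hmp.map_eq]

lemma fract_edgePos_sub {t s : ℝ} (hs : s ∈ Set.Ico (0 : ℝ) 1) :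
    Int.fract (edgePos t s - t) = s := by
  rw [edgePos, sub_right_comm, add_sub_cancel_left, Int.fract_sub_natCast, Int.fract_eq_self.2 hs]

lemma nfl_eq_zero_iff {t s : ℝ} : nfl t s = 0 ↔ s + t < 1 := Nat.floor_eq_zero

lemma nfl_add {t u s : ℝ} (hs : 0 ≤ s + t) (hu : 0 ≤ u) :
    nfl (t + u) s = nfl t s + nfl u (edgePos t s) := by
  have hfloor : (⌊s + t⌋₊ : ℝ) ≤ s + t := Nat.floor_le hs
  simp only [edgePos, nfl]
  rw [add_comm ⌊s + t⌋₊, ← Nat.floor_add_natCast (by linarith)]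
  congr 1
  ring

lemma edgePos_add {t u s : ℝ} (hs : 0 ≤ s + t) (hu : 0 ≤ u) :
    edgePos (t + u) s = edgePos u (edgePos t s) := by
  simp only [edgePos, nfl_add hs hu]
  push_cast
  ring

end UnitInterval

section TreeMeasure

/-- The measure `ρ_i(s) ds` on the metric tree, whose points are the pairs `(i, s)` of an edge
`i` and a position `s` on it, so that `L^p_ρ(L(G))` is the Lebesgue space of this measure. -/
def treeMeasure [MeasurableSpace I] (ρ : I → ℝ → ℝ) : Measure (I × ℝ) :=
  Measure.sum fun i =>
    (unitLebesgue.withDensity fun s => ENNReal.ofReal (ρ i s)).map (Prod.mk i)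

variable {ρ : I → ℝ → ℝ}

lemma IsWeight.aemeasurable (hρ : IsWeight ρ) (i : I) : AEMeasurable (ρ i) unitLebesgue :=
  (hρ.integrable i).aemeasurable

variable [MeasurableSpace I] [DiscreteMeasurableSpace I]

lemma lintegral_treeMeasure (hρ : ∀ i, AEMeasurable (ρ i) unitLebesgue) (F : I × ℝ → ℝ≥0∞) :
    ∫⁻ x, F x ∂treeMeasure ρ =
      ∑' i, ∫⁻ s, F (i, s) * ENNReal.ofReal (ρ i s) ∂unitLebesgue := by
  rw [treeMeasure, lintegral_sum_measure]
  refine tsum_congr fun i => ?_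
  rw [(measurableEmbedding_prodMk_left i).lintegral_map,
    lintegral_withDensity_eq_lintegral_mul_non_measurable₀ _ (hρ i).ennreal_ofReal
      (ae_of_all _ fun _ => ENNReal.ofReal_lt_top)]
  simp only [Pi.mul_apply, mul_comm]

lemma ae_treeMeasure_of_forall_ae [Countable I] {p : I × ℝ → Prop}
    (h : ∀ i, ∀ᵐ s ∂unitLebesgue, p (i, s)) : ∀ᵐ x ∂treeMeasure ρ, p x := by
  refine Measure.ae_sum_iff.2 fun i => (measurableEmbedding_prodMk_left i).ae_map_iff.2 ?_
  exact (withDensity_absolutelyContinuous _ _).ae_le (h i)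

lemma ae_treeMeasure_mem_Ico [Countable I] : ∀ᵐ x ∂treeMeasure ρ, x.2 ∈ Set.Ico (0 : ℝ) 1 :=
  ae_treeMeasure_of_forall_ae fun _ => ae_unitLebesgue_mem_Ico

lemma aemeasurable_treeMeasure [Countable I] {E : Type*} [MeasurableSpace E] {F : I × ℝ → E}
    (hF : ∀ i, AEMeasurable (fun s => F (i, s)) unitLebesgue) :
    AEMeasurable F (treeMeasure ρ) := by
  refine aemeasurable_sum_measure_iff.2 fun i =>
    (measurableEmbedding_prodMk_left i).aemeasurable_map_iff.2 ?_
  exact (hF i).mono_ac (withDensity_absolutelyContinuous _ _)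

lemma IsWeight.aemeasurable_treeMeasure_iff [Countable I] {E : Type*} [MeasurableSpace E]
    (hρ : IsWeight ρ) {F : I × ℝ → E} :
    AEMeasurable F (treeMeasure ρ) ↔ ∀ i, AEMeasurable (fun s => F (i, s)) unitLebesgue := by
  refine ⟨fun hF i => ?_, aemeasurable_treeMeasure⟩
  have hFi := (measurableEmbedding_prodMk_left i).aemeasurable_map_iff.1
    (aemeasurable_sum_measure_iff.1 hF i)
  refine hFi.mono_ac (withDensity_absolutelyContinuous' (hρ.aemeasurable i).ennreal_ofReal ?_)
  filter_upwards [hρ.pos i] with s hs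
  exact (ENNReal.ofReal_pos.2 hs).ne'

lemma IsWeight.treeMeasure_fst_preimage_lt_top (hρ : IsWeight ρ) {S : Set I} (hS : S.Finite) :
    treeMeasure ρ (Prod.fst ⁻¹' S) < ⊤ := by
  rw [← lintegral_indicator_one (measurable_fst (.of_discrete)),
    lintegral_treeMeasure hρ.aemeasurable, tsum_eq_sum (s := hS.toFinset)]
  · refine ENNReal.sum_lt_top.2 fun i hi => ?_
    simpa [hS.mem_toFinset.1 hi] using (hρ.integrable i).lintegral_lt_top
  · intro i hi
    simp [show i ∉ S by simpa using hi]

lemma IsWeight.isLocallyFiniteMeasure [TopologicalSpace I] [DiscreteTopology I]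
    (hρ : IsWeight ρ) : IsLocallyFiniteMeasure (treeMeasure ρ) :=
  ⟨fun x => ⟨Prod.fst ⁻¹' {x.1},
    ((isOpen_discrete {x.1}).preimage continuous_fst).mem_nhds rfl,
    hρ.treeMeasure_fst_preimage_lt_top (Set.finite_singleton x.1)⟩⟩

lemma pnorm_eq_lintegral (hρ : ∀ i, AEMeasurable (ρ i) unitLebesgue) {p : ℝ} (hp : 0 ≤ p)
    (f : I → ℝ → ℝ) : pnorm ρ p f = ∫⁻ x, ‖uncurry f x‖ₑ ^ p ∂treeMeasure ρ := by
  rw [lintegral_treeMeasure hρ, pnorm]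
  refine tsum_congr fun i => lintegral_congr fun s => ?_
  rw [ENNReal.ofReal_mul (by positivity), ← ENNReal.ofReal_rpow_of_nonneg (abs_nonneg _) hp,
    ← Real.enorm_eq_ofReal_abs, Function.uncurry_apply_pair]

lemma enorm'_eq_eLpNorm (hρ : ∀ i, AEMeasurable (ρ i) unitLebesgue) {p : ℝ} (hp : 0 < p)
    (f : I → ℝ → ℝ) :
    enorm' ρ p f = eLpNorm (uncurry f) (ENNReal.ofReal p) (treeMeasure ρ) := by
  rw [eLpNorm_eq_lintegral_rpow_enorm_toReal (by simpa using hp) ENNReal.ofReal_ne_top,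
    ENNReal.toReal_ofReal hp.le, enorm', pnorm_eq_lintegral hρ hp.le]

lemma pdist_eq_eLpNorm (hρ : ∀ i, AEMeasurable (ρ i) unitLebesgue) {p : ℝ} (hp : 0 < p)
    (f g : I → ℝ → ℝ) :
    pdist ρ p f g = eLpNorm (uncurry f - uncurry g) (ENNReal.ofReal p) (treeMeasure ρ) :=
  enorm'_eq_eLpNorm hρ hp _

lemma memLprho_iff_memLp [Countable I] (hρ : IsWeight ρ) {p : ℝ} (hp : 0 < p) (f : I → ℝ → ℝ) :
    memLprho ρ p f ↔ MemLp (uncurry f) (ENNReal.ofReal p) (treeMeasure ρ) := by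
  have hnorm : pnorm ρ p f < ⊤ ↔ enorm' ρ p f < ⊤ :=
    (ENNReal.rpow_lt_top_iff_of_pos (one_div_pos.2 hp)).symm
  rw [memLprho, hnorm, enorm'_eq_eLpNorm hρ.aemeasurable hp, MemLp,
    aestronglyMeasurable_iff_aemeasurable, hρ.aemeasurable_treeMeasure_iff]
  rfl

end TreeMeasure

section Translation

/-- The contribution of the edge `j` to the value of `T_t f` at the point `x` of the tree. -/
def translateTerm (P : I → Option I) (f : I → ℝ → ℝ) (t : ℝ) (x : I × ℝ) (j : I) : ℝ :=
  (Mset P (nfl t x.2) x.1).indicator (fun j => f j (edgePos t x.2)) j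

/-- The weight `ρ_i(s)` of the point `(i, s)` to which `T_t` moves the value that a family takes
on the edge `j` at position `edgePos t s`; zero if `j` has no ancestor `i` at that height. -/
def ancestorWeight (P : I → Option I) (ρ : I → ℝ → ℝ) (t : ℝ) (j : I) (s : ℝ) : ℝ≥0∞ :=
  (pIter P (nfl t s) j).elim 0 fun i => ENNReal.ofReal (ρ i s)

/-- The admissibility condition at time `t` with constant `C`, indexed by the descendant edge `j`
instead of its ancestor: the latter being unique, the infimum disappears. -/
def WeightBoundedBy (P : I → Option I) (ρ : I → ℝ → ℝ) (t : ℝ) (C : ℝ≥0) : Prop :=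
  ∀ j, ∀ᵐ s ∂unitLebesgue, ancestorWeight P ρ t j s ≤ C * ENNReal.ofReal (ρ j (edgePos t s))

variable {P : I → Option I} {ρ : I → ℝ → ℝ} {f g : I → ℝ → ℝ} {t : ℝ} {C : ℝ≥0}

lemma uncurry_Tleft (P : I → Option I) (f : I → ℝ → ℝ) (t : ℝ) (x : I × ℝ) :
    uncurry (Tleft P f t) x = ∑' j, translateTerm P f t x j :=
  tsum_subtype (Mset P (nfl t x.2) x.1) fun j => f j (edgePos t x.2)

lemma translateTerm_sub (x : I × ℝ) (j : I) :
    translateTerm P (f - g) t x j = translateTerm P f t x j - translateTerm P g t x j :=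
  congrFun (Set.indicator_sub _ _ _) j

lemma tsum_indicator_eq_some (o : Option I) (g : I → ℝ≥0∞) :
    ∑' i, {i | o = some i}.indicator g i = o.elim 0 g := by
  rw [← tsum_subtype]
  cases o with
  | none => simp
  | some k =>
    have hset : {i | some k = some i} = {k} := by
      ext i
      simp [eq_comm]
    rw [hset, tsum_singleton k g, Option.elim_some]

lemma weightBoundedBy_iff_le_iInf [Countable I] (hC : C ≠ 0) :
    WeightBoundedBy P ρ t C ↔ ∀ i, ∀ᵐ s ∂unitLebesgue, ENNReal.ofReal (ρ i s) ≤
      C * ⨅ j : Mset P (nfl t s) i, ENNReal.ofReal (ρ j (s + t - nfl t s)) := by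
  simp only [WeightBoundedBy, ← ae_all_iff]
  refine eventually_congr (ae_of_all _ fun s => ?_)
  simp only [ENNReal.mul_iInf_of_ne (ENNReal.coe_ne_zero.2 hC) ENNReal.coe_ne_top, le_iInf_iff,
    add_comm s t]
  refine ⟨fun h i ⟨j, hj⟩ => ?_, fun h j => ?_⟩
  · have hij := h j
    rwa [ancestorWeight, show pIter P (nfl t s) j = some i from hj] at hij
  · rw [ancestorWeight]
    cases hj : pIter P (nfl t s) j with
    | none => exact bot_le
    | some i => exact h i ⟨j, hj⟩

lemma measurableSet_pIter_nfl_eq (P : I → Option I) (t : ℝ) (i j : I) :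
    MeasurableSet {s | pIter P (nfl t s) j = some i} :=
  measurable_nfl t (MeasurableSet.of_discrete (s := {n | pIter P n j = some i}))

lemma ancestorWeight_eq_tsum (P : I → Option I) (ρ : I → ℝ → ℝ) (t : ℝ) (j : I) (s : ℝ) :
    ancestorWeight P ρ t j s =
      ∑' i, {s | pIter P (nfl t s) j = some i}.indicator (fun s => ENNReal.ofReal (ρ i s)) s :=
  (tsum_indicator_eq_some _ _).symm

lemma aemeasurable_ancestorWeight [Countable I] (hρ : ∀ i, AEMeasurable (ρ i) unitLebesgue)
    (P : I → Option I) (t : ℝ) (j : I) : AEMeasurable (ancestorWeight P ρ t j) unitLebesgue := by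
  simp only [funext (ancestorWeight_eq_tsum P ρ t j)]
  exact .tsum fun i =>
    (hρ i).ennreal_ofReal.indicator (measurableSet_pIter_nfl_eq P t i j)

lemma aemeasurable_translateTerm_edge (ht : 0 ≤ t) {j : I} (hf : AEMeasurable (f j) unitLebesgue)
    (i : I) : AEMeasurable (fun s => translateTerm P f t (i, s) j) unitLebesgue :=
  (hf.comp_quasiMeasurePreserving (measurePreserving_edgePos ht).quasiMeasurePreserving).indicator
    (measurableSet_pIter_nfl_eq P t i j)

variable [MeasurableSpace I] [DiscreteMeasurableSpace I] [Countable I]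

lemma lintegral_enorm_translateTerm (hρ : ∀ i, AEMeasurable (ρ i) unitLebesgue) (ht : 0 ≤ t)
    {j : I} (hf : AEMeasurable (f j) unitLebesgue) :
    ∫⁻ x, ‖translateTerm P f t x j‖ₑ ∂treeMeasure ρ =
      ∫⁻ s, ‖f j (edgePos t s)‖ₑ * ancestorWeight P ρ t j s ∂unitLebesgue := by
  have hmeas (i : I) : AEMeasurable
      (fun s => ‖translateTerm P f t (i, s) j‖ₑ * ENNReal.ofReal (ρ i s)) unitLebesgue :=
    (aemeasurable_translateTerm_edge ht hf i).enorm.mul (hρ i).ennreal_ofReal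
  rw [lintegral_treeMeasure hρ, ← lintegral_tsum hmeas]
  refine lintegral_congr fun s => ?_
  rw [ancestorWeight_eq_tsum, ← ENNReal.tsum_mul_left]
  refine tsum_congr fun i => ?_
  by_cases h : pIter P (nfl t s) j = some i <;> simp [translateTerm, Mset, h]

lemma WeightBoundedBy.lintegral_tsum_enorm_translateTerm_le (h : WeightBoundedBy P ρ t C)
    (hρ : ∀ i, AEMeasurable (ρ i) unitLebesgue) (ht : 0 ≤ t)
    (hf : ∀ j, AEMeasurable (f j) unitLebesgue) :
    ∫⁻ x, ∑' j, ‖translateTerm P f t x j‖ₑ ∂treeMeasure ρ ≤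
      C * ∫⁻ x, ‖uncurry f x‖ₑ ∂treeMeasure ρ := by
  rw [lintegral_tsum fun j => (aemeasurable_treeMeasure
      (aemeasurable_translateTerm_edge ht (hf j))).enorm,
    lintegral_treeMeasure hρ, ← ENNReal.tsum_mul_left]
  refine ENNReal.tsum_le_tsum fun j => ?_
  have hfρ : AEMeasurable (fun s => ‖f j s‖ₑ * ENNReal.ofReal (ρ j s)) unitLebesgue :=
    (hf j).enorm.mul (hρ j).ennreal_ofReal
  calc ∫⁻ x, ‖translateTerm P f t x j‖ₑ ∂treeMeasure ρ
      = ∫⁻ s, ‖f j (edgePos t s)‖ₑ * ancestorWeight P ρ t j s ∂unitLebesgue :=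
        lintegral_enorm_translateTerm hρ ht (hf j)
    _ ≤ ∫⁻ s, C * (‖f j (edgePos t s)‖ₑ * ENNReal.ofReal (ρ j (edgePos t s))) ∂unitLebesgue := by
        refine lintegral_mono_ae ?_
        filter_upwards [h j] with s hs
        rw [mul_left_comm]
        gcongr
    _ = C * ∫⁻ s, ‖f j s‖ₑ * ENNReal.ofReal (ρ j s) ∂unitLebesgue := by
        rw [lintegral_const_mul' _ _ ENNReal.coe_ne_top, lintegral_comp_edgePos ht hfρ]

lemma WeightBoundedBy.eLpNorm_Tleft_le (h : WeightBoundedBy P ρ t C) (hρ : IsWeight ρ)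
    (ht : 0 ≤ t) (hf : AEMeasurable (uncurry f) (treeMeasure ρ)) :
    eLpNorm (uncurry (Tleft P f t)) 1 (treeMeasure ρ) ≤
      C * eLpNorm (uncurry f) 1 (treeMeasure ρ) := by
  simp only [eLpNorm_one_eq_lintegral_enorm]
  refine (lintegral_mono fun x => ?_).trans (h.lintegral_tsum_enorm_translateTerm_le
    hρ.aemeasurable ht (hρ.aemeasurable_treeMeasure_iff.1 hf))
  rw [uncurry_Tleft]
  exact enorm_tsum_le_tsum_enorm

lemma WeightBoundedBy.ae_summable_translateTerm (h : WeightBoundedBy P ρ t C) (hρ : IsWeight ρ)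
    (ht : 0 ≤ t) (hf : MemLp (uncurry f) 1 (treeMeasure ρ)) :
    ∀ᵐ x ∂treeMeasure ρ, Summable (translateTerm P f t x) := by
  have hfj := hρ.aemeasurable_treeMeasure_iff.1 hf.1.aemeasurable
  have hint : ∫⁻ x, ∑' j, ‖translateTerm P f t x j‖ₑ ∂treeMeasure ρ ≠ ⊤ :=
    ((h.lintegral_tsum_enorm_translateTerm_le hρ.aemeasurable ht hfj).trans_lt
      (ENNReal.mul_lt_top ENNReal.coe_lt_top
        (eLpNorm_one_eq_lintegral_enorm (f := uncurry f) ▸ hf.2))).ne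
  have hmeas : AEMeasurable (fun x => ∑' j, ‖translateTerm P f t x j‖ₑ) (treeMeasure ρ) :=
    .tsum fun j =>
      (aemeasurable_treeMeasure (aemeasurable_translateTerm_edge ht (hfj j))).enorm
  filter_upwards [ae_lt_top' hmeas hint] with x hx
  exact .of_enorm hx.ne

lemma WeightBoundedBy.memLp_Tleft (h : WeightBoundedBy P ρ t C) (hρ : IsWeight ρ)
    (ht : 0 ≤ t) (hf : MemLp (uncurry f) 1 (treeMeasure ρ)) :
    MemLp (uncurry (Tleft P f t)) 1 (treeMeasure ρ) := by
  have hfj := hρ.aemeasurable_treeMeasure_iff.1 hf.1.aemeasurable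
  refine ⟨AEMeasurable.aestronglyMeasurable ?_,
    (h.eLpNorm_Tleft_le hρ ht hf.1.aemeasurable).trans_lt
      (ENNReal.mul_lt_top ENNReal.coe_lt_top hf.2)⟩
  refine aemeasurable_of_tendsto_metrizable_ae (u := atTop)
    (f := fun (F : Finset I) x => ∑ j ∈ F, translateTerm P f t x j) (fun F =>
      Finset.aemeasurable_fun_sum F fun j _ =>
        aemeasurable_treeMeasure (aemeasurable_translateTerm_edge ht (hfj j))) ?_
  filter_upwards [h.ae_summable_translateTerm hρ ht hf] with x hx
  rw [uncurry_Tleft]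
  exact hx.hasSum

lemma WeightBoundedBy.Tleft_sub_ae_eq (h : WeightBoundedBy P ρ t C) (hρ : IsWeight ρ)
    (ht : 0 ≤ t) (hf : MemLp (uncurry f) 1 (treeMeasure ρ))
    (hg : MemLp (uncurry g) 1 (treeMeasure ρ)) :
    uncurry (Tleft P (f - g) t) =ᵐ[treeMeasure ρ]
      uncurry (Tleft P f t) - uncurry (Tleft P g t) := by
  filter_upwards [h.ae_summable_translateTerm hρ ht hf, h.ae_summable_translateTerm hρ ht hg]
    with x hfx hgx
  simp only [Pi.sub_apply, uncurry_Tleft, translateTerm_sub, hfx.tsum_sub hgx]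

lemma WeightBoundedBy.eLpNorm_Tleft_sub_le (h : WeightBoundedBy P ρ t C) (hρ : IsWeight ρ)
    (ht : 0 ≤ t) (hf : MemLp (uncurry f) 1 (treeMeasure ρ))
    (hg : MemLp (uncurry g) 1 (treeMeasure ρ)) :
    eLpNorm (uncurry (Tleft P f t) - uncurry (Tleft P g t)) 1 (treeMeasure ρ) ≤
      C * eLpNorm (uncurry f - uncurry g) 1 (treeMeasure ρ) := by
  rw [← eLpNorm_congr_ae (h.Tleft_sub_ae_eq hρ ht hf hg)]
  exact h.eLpNorm_Tleft_le hρ ht (hf.1.aemeasurable.sub hg.1.aemeasurable)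

end Translation

section SemigroupLaw

variable {P : I → Option I} {ρ : I → ℝ → ℝ} {f : I → ℝ → ℝ}

lemma pIter_add (P : I → Option I) (n m : ℕ) (j : I) :
    pIter P (n + m) j = (pIter P m j).bind (pIter P n) := by
  induction m generalizing j with
  | zero => rfl
  | succ m ih =>
    rw [← add_assoc, pIter, pIter, Option.bind_assoc, funext ih]

lemma Mset_add (P : I → Option I) (n m : ℕ) (i : I) :
    Mset P (n + m) i = ⋃ k : Mset P n i, Mset P m k := by
  ext j
  simp [Mset, pIter_add, Option.bind_eq_some_iff, and_comm]

lemma pairwise_disjoint_Mset (P : I → Option I) (n m : ℕ) (i : I) :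
    Pairwise (Function.onFun Disjoint fun k : Mset P n i => Mset P m k) := fun _ _ hkl =>
  Set.disjoint_left.2 fun _ hk hl => hkl (Subtype.ext (Option.some_injective _ (hk.symm.trans hl)))

lemma tsum_Mset_add {n m : ℕ} {i : I} {g : I → ℝ}
    (hg : Summable fun j : Mset P (n + m) i => g j) :
    ∑' j : Mset P (n + m) i, g j = ∑' k : Mset P n i, ∑' j : Mset P m k, g j := by
  rw [Mset_add] at hg ⊢
  let e := Set.unionEqSigmaOfDisjoint (pairwise_disjoint_Mset P n m i)
  rw [← e.symm.tsum_eq]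
  exact (e.symm.summable_iff.2 hg).tsum_sigma

lemma Tleft_apply (P : I → Option I) (f : I → ℝ → ℝ) (t : ℝ) (i : I) (s : ℝ) :
    Tleft P f t i s = ∑' j : Mset P (nfl t s) i, f j (edgePos t s) := rfl

lemma Tleft_of_add_lt_one {t s : ℝ} (h : s + t < 1) (i : I) :
    Tleft P f t i s = f i (t + s) := by
  have hMset : Mset P 0 i = {i} := by
    ext j
    simp [Mset, pIter]
  rw [Tleft, nfl_eq_zero_iff.2 h, hMset, tsum_singleton i fun j => f j (t + s - (0 : ℕ)),
    Nat.cast_zero, sub_zero]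

lemma Tleft_add_of_summable {t u s : ℝ} {i : I} (hs : 0 ≤ s + t) (hu : 0 ≤ u)
    (hf : Summable (translateTerm P f (t + u) (i, s))) :
    Tleft P f (t + u) i s = Tleft P (Tleft P f u) t i s := by
  have hsum : Summable fun j : Mset P (nfl (t + u) s) i => f j (edgePos (t + u) s) :=
    summable_subtype_iff_indicator (f := fun j => f j (edgePos (t + u) s)).2 hf
  rw [edgePos_add hs hu, nfl_add hs hu] at hsum
  calc Tleft P f (t + u) i s
      = ∑' j : Mset P (nfl t s + nfl u (edgePos t s)) i, f j (edgePos u (edgePos t s)) := by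
        rw [Tleft_apply, edgePos_add hs hu, nfl_add hs hu]
    _ = ∑' k : Mset P (nfl t s) i, Tleft P f u k (edgePos t s) :=
        tsum_Mset_add (g := fun j => f j (edgePos u (edgePos t s))) hsum

variable [MeasurableSpace I] [DiscreteMeasurableSpace I] [Countable I]

lemma Tleft_zero_ae_eq (P : I → Option I) (f : I → ℝ → ℝ) :
    uncurry (Tleft P f 0) =ᵐ[treeMeasure ρ] uncurry f := by
  refine ae_treeMeasure_of_forall_ae fun i => ?_
  filter_upwards [ae_unitLebesgue_mem_Ico] with s hs
  rw [Function.uncurry_apply_pair, Tleft_of_add_lt_one ((add_zero s).trans_lt hs.2), zero_add,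
    Function.uncurry_apply_pair]

lemma WeightBoundedBy.Tleft_add_ae_eq {t u : ℝ} {C : ℝ≥0} (h : WeightBoundedBy P ρ (t + u) C)
    (hρ : IsWeight ρ) (ht : 0 ≤ t) (hu : 0 ≤ u) (hf : MemLp (uncurry f) 1 (treeMeasure ρ)) :
    uncurry (Tleft P f (t + u)) =ᵐ[treeMeasure ρ] uncurry (Tleft P (Tleft P f u) t) := by
  filter_upwards [ae_treeMeasure_mem_Ico, h.ae_summable_translateTerm hρ (add_nonneg ht hu) hf]
    with ⟨i, s⟩ hs hsum
  exact Tleft_add_of_summable (add_nonneg hs.1 ht) hu hsum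

end SemigroupLaw

section StrongContinuity

/-- The edges having a descendant in `F` fewer than `N` generations below. -/
def ancestorsWithin (P : I → Option I) (F : Set I) (N : ℕ) : Set I :=
  {i | ∃ j ∈ F, ∃ n < N, pIter P n j = some i}

variable {P : I → Option I} {ρ : I → ℝ → ℝ} {f g : I → ℝ → ℝ} {t : ℝ}

lemma finite_ancestorsWithin {F : Set I} (hF : F.Finite) (P : I → Option I) (N : ℕ) :
    (ancestorsWithin P F N).Finite := by
  have hunion : ancestorsWithin P F N = ⋃ j ∈ F, ⋃ n ∈ Set.Iio N, {i | pIter P n j = some i} := by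
    ext i
    simp [ancestorsWithin]
  rw [hunion]
  refine hF.biUnion fun j _ => (Set.finite_Iio N).biUnion fun n _ => ?_
  exact Set.Subsingleton.finite fun i hi k hk => Option.some_injective _ (hi.symm.trans hk)

lemma uncurry_Tleft_eq_sum {F : Finset I} (hF : ∀ j ∉ F, f j = 0) (P : I → Option I) (t : ℝ)
    (x : I × ℝ) : uncurry (Tleft P f t) x = ∑ j ∈ F, translateTerm P f t x j := by
  rw [uncurry_Tleft]
  refine tsum_eq_sum fun j hj => Set.indicator_apply_eq_zero.2 fun _ => ?_
  rw [hF j hj, Pi.zero_apply]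

lemma enorm_Tleft_le_indicator {F : Finset I} (hF : ∀ j ∉ F, f j = 0) {K : ℝ≥0∞}
    (hK : ∀ j s, ‖f j s‖ₑ ≤ K) {N : ℕ} {x : I × ℝ} (hN : nfl t x.2 < N) :
    ‖uncurry (Tleft P f t) x‖ₑ ≤
      (Prod.fst ⁻¹' ancestorsWithin P F N).indicator (fun _ => F.card * K) x := by
  rw [uncurry_Tleft_eq_sum hF]
  by_cases hx : x.1 ∈ ancestorsWithin P F N
  · rw [Set.indicator_of_mem (Set.mem_preimage.2 hx), ← nsmul_eq_mul]
    refine (enorm_sum_le _ _).trans (Finset.sum_le_card_nsmul _ _ _ fun j _ => ?_)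
    exact (enorm_indicator_le_enorm_self _ _).trans (hK j _)
  · have hzero (j : I) (hj : j ∈ F) : translateTerm P f t x j = 0 :=
      Set.indicator_of_notMem (s := Mset P (nfl t x.2) x.1)
        (fun hmem => hx ⟨j, hj, nfl t x.2, hN, hmem⟩) _
    rw [Finset.sum_eq_zero hzero, enorm_zero]
    exact bot_le

lemma exists_finset_eq_zero_of_hasCompactSupport [TopologicalSpace I] [DiscreteTopology I]
    (hg : HasCompactSupport (uncurry g)) : ∃ F : Finset I, ∀ j ∉ F, g j = 0 := by
  have hfin : (Prod.fst '' tsupport (uncurry g)).Finite :=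
    (hg.isCompact.image continuous_fst).finite_of_discrete
  refine ⟨hfin.toFinset, fun j hj => funext fun s => ?_⟩
  exact image_eq_zero_of_notMem_tsupport (f := uncurry g) (x := (j, s)) fun hmem =>
    hj (hfin.mem_toFinset.2 ⟨(j, s), hmem, rfl⟩)

lemma tendsto_Tleft_of_continuous (P : I → Option I) {i : I} (hg : Continuous (g i)) {s : ℝ}
    (hs : s < 1) : Tendsto (fun t => Tleft P g t i s) (𝓝 0) (𝓝 (g i s)) := by
  have hlim : Tendsto (fun t => g i (t + s)) (𝓝 0) (𝓝 (g i (0 + s))) :=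
    (hg.comp (continuous_add_const s)).tendsto 0
  rw [zero_add] at hlim
  refine hlim.congr' ?_
  filter_upwards [eventually_lt_nhds (sub_pos.2 hs)] with t ht
  exact (Tleft_of_add_lt_one (lt_sub_iff_add_lt'.1 ht) i).symm

variable [MeasurableSpace I] [DiscreteMeasurableSpace I] [Countable I]

lemma aemeasurable_Tleft_of_finset {F : Finset I} (hF : ∀ j ∉ F, f j = 0)
    (hf : ∀ j, AEMeasurable (f j) unitLebesgue) (P : I → Option I) (ht : 0 ≤ t) :
    AEMeasurable (uncurry (Tleft P f t)) (treeMeasure ρ) := by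
  simp only [funext (uncurry_Tleft_eq_sum hF P t)]
  exact Finset.aemeasurable_fun_sum F fun j _ =>
    aemeasurable_treeMeasure (aemeasurable_translateTerm_edge ht (hf j))

lemma ae_enorm_Tleft_sub_le_indicator {F : Finset I} (hF : ∀ j ∉ F, g j = 0) {K : ℝ≥0∞}
    (hK : ∀ j s, ‖g j s‖ₑ ≤ K) (P : I → Option I) (ht : t < 1) :
    ∀ᵐ x ∂treeMeasure ρ, ‖(uncurry (Tleft P g t) - uncurry g) x‖ₑ ≤
      (Prod.fst ⁻¹' ancestorsWithin P F 2).indicator (fun _ => F.card * K + K) x := by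
  filter_upwards [ae_treeMeasure_mem_Ico] with x hx
  have hnfl : nfl t x.2 < 2 := by
    refine (Nat.floor_lt' two_ne_zero).2 ?_
    push_cast
    linarith [hx.2]
  rw [Set.indicator_add]
  refine enorm_sub_le.trans (add_le_add (enorm_Tleft_le_indicator hF hK hnfl) ?_)
  by_cases hxF : x.1 ∈ F
  · have hx' : x.1 ∈ ancestorsWithin P F 2 := ⟨x.1, hxF, 0, two_pos, rfl⟩
    rw [Set.indicator_of_mem (Set.mem_preimage.2 hx')]
    exact hK x.1 x.2
  · rw [uncurry, hF x.1 hxF, Pi.zero_apply, enorm_zero]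
    exact bot_le

lemma IsWeight.tendsto_eLpNorm_Tleft_sub_of_hasCompactSupport [TopologicalSpace I]
    [DiscreteTopology I] (hρ : IsWeight ρ) (P : I → Option I) (hcont : Continuous (uncurry g))
    (hsupp : HasCompactSupport (uncurry g)) :
    Tendsto (fun t => eLpNorm (uncurry (Tleft P g t) - uncurry g) 1 (treeMeasure ρ))
      (𝓝[≥] 0) (𝓝 0) := by
  obtain ⟨F, hF⟩ := exists_finset_eq_zero_of_hasCompactSupport hsupp
  obtain ⟨K, hK⟩ := hsupp.exists_bound_of_continuous hcont
  have hK' (j : I) (s : ℝ) : ‖g j s‖ₑ ≤ ENNReal.ofReal K := by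
    rw [← ofReal_norm]
    exact ENNReal.ofReal_le_ofReal (hK (j, s))
  have hgj (j : I) : Continuous (g j) := hcont.comp (by fun_prop : Continuous fun s => (j, s))
  have hg : AEMeasurable (uncurry g) (treeMeasure ρ) :=
    aemeasurable_treeMeasure fun j => (hgj j).aemeasurable
  have hbound_ne_top : ∫⁻ x, (Prod.fst ⁻¹' ancestorsWithin P F 2).indicator
      (fun _ => F.card * ENNReal.ofReal K + ENNReal.ofReal K) x ∂treeMeasure ρ ≠ ⊤ := by
    rw [lintegral_indicator_const (measurable_fst .of_discrete)]
    exact ENNReal.mul_ne_top (by finiteness) (hρ.treeMeasure_fst_preimage_lt_top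
      (finite_ancestorsWithin F.finite_toSet P 2)).ne
  simp only [eLpNorm_one_eq_lintegral_enorm]
  rw [← lintegral_zero (μ := treeMeasure ρ)]
  refine tendsto_lintegral_filter_of_dominated_convergence' _ ?_ ?_ hbound_ne_top ?_
  · filter_upwards [self_mem_nhdsWithin] with t ht
    exact ((aemeasurable_Tleft_of_finset hF (fun j => (hgj j).aemeasurable) P ht).sub hg).enorm
  · filter_upwards [nhdsWithin_le_nhds (eventually_lt_nhds one_pos)] with t ht
    exact ae_enorm_Tleft_sub_le_indicator hF hK' P ht
  · filter_upwards [ae_treeMeasure_mem_Ico] with x hx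
    have hlim := ((tendsto_Tleft_of_continuous P (hgj x.1) hx.2).sub_const (g x.1 x.2)).enorm
    rw [sub_self, enorm_zero] at hlim
    exact hlim.mono_left nhdsWithin_le_nhds

lemma eLpNorm_Tleft_sub_self_le {C : ℝ≥0} (hC : WeightBoundedBy P ρ t C) (hρ : IsWeight ρ)
    (ht : 0 ≤ t) (hf : MemLp (uncurry f) 1 (treeMeasure ρ))
    (hg : MemLp (uncurry g) 1 (treeMeasure ρ)) :
    eLpNorm (uncurry (Tleft P f t) - uncurry f) 1 (treeMeasure ρ) ≤
      (C + 1) * eLpNorm (uncurry f - uncurry g) 1 (treeMeasure ρ) +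
        eLpNorm (uncurry (Tleft P g t) - uncurry g) 1 (treeMeasure ρ) := by
  have hTf := hC.memLp_Tleft hρ ht hf
  have hTg := hC.memLp_Tleft hρ ht hg
  have hsplit : uncurry (Tleft P f t) - uncurry f =
      (uncurry (Tleft P f t) - uncurry (Tleft P g t)) - (uncurry f - uncurry g) +
        (uncurry (Tleft P g t) - uncurry g) := by abel
  rw [hsplit, add_mul, one_mul]
  refine (eLpNorm_add_le ((hTf.1.sub hTg.1).sub (hf.1.sub hg.1)) (hTg.1.sub hg.1) le_rfl).trans ?_
  gcongr
  refine (eLpNorm_sub_le (hTf.1.sub hTg.1) (hf.1.sub hg.1) le_rfl).trans ?_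
  gcongr
  exact hC.eLpNorm_Tleft_sub_le hρ ht hf hg

variable {C : ℝ → ℝ≥0}

lemma tendsto_eLpNorm_Tleft_sub_self (hC : ∀ t ≥ 0, WeightBoundedBy P ρ t (C t))
    (hCcont : Continuous C) (hρ : IsWeight ρ) (hf : MemLp (uncurry f) 1 (treeMeasure ρ)) :
    Tendsto (fun t => eLpNorm (uncurry (Tleft P f t) - uncurry f) 1 (treeMeasure ρ))
      (𝓝[≥] 0) (𝓝 0) := by
  let : TopologicalSpace I := ⊥
  have : DiscreteTopology I := ⟨rfl⟩
  have := hρ.isLocallyFiniteMeasure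
  rw [ENNReal.tendsto_nhds_zero]
  intro ε hε
  obtain ⟨δ, hδ, hδε⟩ := ENNReal.exists_nnreal_pos_mul_lt (a := C 0 + 1) (by finiteness) hε.ne'
  obtain ⟨g, hsupp, hfg, hcont, hg⟩ :=
    hf.exists_hasCompactSupport_eLpNorm_sub_le ENNReal.one_ne_top (ENNReal.coe_pos.2 hδ).ne'
  obtain ⟨g, rfl⟩ : ∃ g', uncurry g' = g := ⟨curry g, Function.uncurry_curry g⟩
  have hlim : Tendsto (fun t => ((C t : ℝ≥0∞) + 1) * δ +
      eLpNorm (uncurry (Tleft P g t) - uncurry g) 1 (treeMeasure ρ))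
      (𝓝[≥] 0) (𝓝 ((C 0 + 1) * δ + 0)) := by
    refine .add (ENNReal.Tendsto.mul_const (.add_const _ ?_) (.inr ENNReal.coe_ne_top))
      (hρ.tendsto_eLpNorm_Tleft_sub_of_hasCompactSupport P hcont hsupp)
    exact ENNReal.tendsto_coe.2 (hCcont.tendsto 0 |>.mono_left nhdsWithin_le_nhds)
  rw [add_zero, mul_comm _ (δ : ℝ≥0∞)] at hlim
  filter_upwards [hlim.eventually_lt_const hδε, self_mem_nhdsWithin] with t hlt ht
  refine (eLpNorm_Tleft_sub_self_le (hC t ht) hρ ht hf hg).trans (le_trans ?_ hlt.le)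
  gcongr

lemma eLpNorm_Tleft_sub_Tleft_le (hC : ∀ t ≥ 0, WeightBoundedBy P ρ t (C t)) (hρ : IsWeight ρ)
    (hf : MemLp (uncurry f) 1 (treeMeasure ρ)) {t u : ℝ} (ht : 0 ≤ t) (hu : 0 ≤ u) :
    eLpNorm (uncurry (Tleft P f u) - uncurry (Tleft P f t)) 1 (treeMeasure ρ) ≤
      C (min u t) *
        eLpNorm (uncurry (Tleft P f |u - t|) - uncurry f) 1 (treeMeasure ρ) := by
  wlog htu : t ≤ u generalizing t u
  · rw [eLpNorm_sub_comm, min_comm, abs_sub_comm]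
    exact this hu ht (le_of_not_ge htu)
  rw [min_eq_right htu, abs_of_nonneg (sub_nonneg.2 htu)]
  have hadd := (hC (t + (u - t)) (by linarith)).Tleft_add_ae_eq hρ ht (sub_nonneg.2 htu) hf
  rw [add_sub_cancel] at hadd
  rw [eLpNorm_congr_ae (hadd.sub (ae_eq_refl _))]
  exact (hC t ht).eLpNorm_Tleft_sub_le hρ ht
    ((hC (u - t) (sub_nonneg.2 htu)).memLp_Tleft hρ (sub_nonneg.2 htu) hf) hf

lemma tendsto_eLpNorm_Tleft_sub_Tleft (hC : ∀ t ≥ 0, WeightBoundedBy P ρ t (C t))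
    (hCcont : Continuous C) (hρ : IsWeight ρ) (hf : MemLp (uncurry f) 1 (treeMeasure ρ))
    (ht : 0 ≤ t) :
    Tendsto (fun u => eLpNorm (uncurry (Tleft P f u) - uncurry (Tleft P f t)) 1 (treeMeasure ρ))
      (𝓝[Set.Ici 0] t) (𝓝 0) := by
  have hdist : Tendsto (fun u => |u - t|) (𝓝[Set.Ici 0] t) (𝓝[≥] 0) := by
    refine tendsto_nhdsWithin_iff.2 ⟨?_, .of_forall fun u => abs_nonneg (u - t)⟩
    have habs : Continuous fun u => |u - t| := by fun_prop
    simpa using (habs.tendsto t).mono_left nhdsWithin_le_nhds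
  have hmin : Tendsto (fun u => (C (min u t) : ℝ≥0∞)) (𝓝[Set.Ici 0] t) (𝓝 (C t)) := by
    have hCmin : Continuous fun u => C (min u t) := by fun_prop
    simpa using ENNReal.tendsto_coe.2 ((hCmin.tendsto t).mono_left nhdsWithin_le_nhds)
  have hprod := ENNReal.Tendsto.mul hmin (.inr ENNReal.zero_ne_top)
    ((tendsto_eLpNorm_Tleft_sub_self hC hCcont hρ hf).comp hdist) (.inr ENNReal.coe_ne_top)
  rw [mul_zero] at hprod
  refine tendsto_of_tendsto_of_tendsto_of_le_of_le' tendsto_const_nhds hprod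
    (.of_forall fun _ => bot_le) ?_
  filter_upwards [self_mem_nhdsWithin] with u hu
  exact eLpNorm_Tleft_sub_Tleft_le hC hρ hf ht hu

end StrongContinuity

section Necessity

variable {P : I → Option I} {ρ : I → ℝ → ℝ} {t : ℝ}
variable [MeasurableSpace I] [DiscreteMeasurableSpace I]

/-- The family supported on the edge `j`, with the single nonzero component `φ`. -/
def edgeFamily (j : I) (φ : ℝ → ℝ) : I → ℝ → ℝ :=
  open scoped Classical in Pi.single j φ

lemma lintegral_enorm_indicator_edgePos_mul (t : ℝ) {A : Set ℝ} (hA : MeasurableSet A)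
    (G : ℝ → ℝ≥0∞) :
    ∫⁻ s, ‖{r | Int.fract (r - t) ∈ A}.indicator (1 : ℝ → ℝ) (edgePos t s)‖ₑ * G s ∂unitLebesgue =
      ∫⁻ s in A, G s ∂unitLebesgue := by
  rw [← lintegral_indicator hA]
  refine lintegral_congr_ae ?_
  filter_upwards [ae_unitLebesgue_mem_Ico] with s hs
  by_cases hsA : s ∈ A <;> simp [fract_edgePos_sub hs, hsA]

lemma lintegral_enorm_edgeFamily (hρ : ∀ i, AEMeasurable (ρ i) unitLebesgue) (j : I) (φ : ℝ → ℝ) :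
    ∫⁻ x, ‖uncurry (edgeFamily j φ) x‖ₑ ∂treeMeasure ρ =
      ∫⁻ s, ‖φ s‖ₑ * ENNReal.ofReal (ρ j s) ∂unitLebesgue := by
  rw [lintegral_treeMeasure hρ, tsum_eq_single j fun i hi => by simp [edgeFamily, hi]]
  simp [edgeFamily]

variable [Countable I]

lemma lintegral_enorm_Tleft_edgeFamily (hρ : ∀ i, AEMeasurable (ρ i) unitLebesgue) (ht : 0 ≤ t)
    (j : I) {φ : ℝ → ℝ} (hφ : AEMeasurable φ unitLebesgue) :
    ∫⁻ x, ‖uncurry (Tleft P (edgeFamily j φ) t) x‖ₑ ∂treeMeasure ρ =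
      ∫⁻ s, ‖φ (edgePos t s)‖ₑ * ancestorWeight P ρ t j s ∂unitLebesgue := by
  have hj : edgeFamily j φ j = φ := by simp [edgeFamily]
  have hsupp (i : I) (hi : i ∉ ({j} : Finset I)) : edgeFamily j φ i = 0 := by
    simp [edgeFamily, Finset.notMem_singleton.1 hi]
  simp only [uncurry_Tleft_eq_sum hsupp, Finset.sum_singleton]
  rw [lintegral_enorm_translateTerm hρ ht (hj.symm ▸ hφ), hj]

lemma IsWeight.memLp_edgeFamily (hρ : IsWeight ρ) (j : I) {φ : ℝ → ℝ}
    (hφ : AEMeasurable φ unitLebesgue) (hφ_le : ∀ s, ‖φ s‖ₑ ≤ 1) :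
    MemLp (uncurry (edgeFamily j φ)) 1 (treeMeasure ρ) := by
  refine ⟨(aemeasurable_treeMeasure fun i => ?_).aestronglyMeasurable, ?_⟩
  · rcases eq_or_ne i j with rfl | hi
    · simpa [edgeFamily] using hφ
    · simp [edgeFamily, hi]
  · rw [eLpNorm_one_eq_lintegral_enorm, lintegral_enorm_edgeFamily hρ.aemeasurable]
    exact (lintegral_mono fun s => mul_le_of_le_one_left' (hφ_le s)).trans_lt
      (hρ.integrable j).lintegral_lt_top

lemma weightBoundedBy_of_eLpNorm_Tleft_le {C : ℝ≥0} (hρ : IsWeight ρ) (ht : 0 ≤ t)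
    (h : ∀ f, MemLp (uncurry f) 1 (treeMeasure ρ) →
      eLpNorm (uncurry (Tleft P f t)) 1 (treeMeasure ρ) ≤
        C * eLpNorm (uncurry f) 1 (treeMeasure ρ)) :
    WeightBoundedBy P ρ t C := by
  intro j
  refine ae_le_of_forall_setLIntegral_le_of_sigmaFinite₀
    (aemeasurable_ancestorWeight hρ.aemeasurable P t j) fun A hA _ => ?_
  -- `φ ∘ edgePos t` is almost everywhere the indicator function of `A`.
  let φ : ℝ → ℝ := {r | Int.fract (r - t) ∈ A}.indicator 1
  have hφ : Measurable φ := measurable_one.indicator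
    (measurable_fract.comp (measurable_id.sub_const t) hA)
  have hφ_le (s : ℝ) : ‖φ s‖ₑ ≤ 1 :=
    (enorm_indicator_le_enorm_self _ _).trans_eq enorm_one
  have hφρ : AEMeasurable (fun s => ‖φ s‖ₑ * ENNReal.ofReal (ρ j s)) unitLebesgue :=
    hφ.enorm.aemeasurable.mul (hρ.aemeasurable j).ennreal_ofReal
  have hbound := h _ (hρ.memLp_edgeFamily j hφ.aemeasurable hφ_le)
  rw [eLpNorm_one_eq_lintegral_enorm, eLpNorm_one_eq_lintegral_enorm,
    lintegral_enorm_Tleft_edgeFamily hρ.aemeasurable ht j hφ.aemeasurable,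
    lintegral_enorm_edgeFamily hρ.aemeasurable, ← lintegral_comp_edgePos ht hφρ,
    lintegral_enorm_indicator_edgePos_mul t hA,
    lintegral_enorm_indicator_edgePos_mul t hA] at hbound
  rwa [lintegral_const_mul' _ _ ENNReal.coe_ne_top]

end Necessity

section Semigroup

variable {P : I → Option I} {ρ : I → ℝ → ℝ} {M w : ℝ} [Countable I]

lemma c0SemigroupBound_one_iff (hρ : IsWeight ρ) :
    C0SemigroupBound P ρ 1 M w ↔
      ∀ t ≥ 0, WeightBoundedBy P ρ t (M * Real.exp (w * t)).toNNReal := by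
  let _ : MeasurableSpace I := ⊤
  simp only [C0SemigroupBound, memLprho_iff_memLp hρ one_pos,
    enorm'_eq_eLpNorm hρ.aemeasurable one_pos, pdist_eq_eLpNorm hρ.aemeasurable one_pos,
    ENNReal.ofReal_one]
  refine ⟨fun ⟨_, hbound, _⟩ t ht => weightBoundedBy_of_eLpNorm_Tleft_le hρ ht (hbound t ht),
    fun hC => ⟨?_, ?_, ?_, ?_, ?_⟩⟩
  · exact fun t ht f hf => (hC t ht).memLp_Tleft hρ ht hf
  · exact fun t ht f hf => (hC t ht).eLpNorm_Tleft_le hρ ht hf.1.aemeasurable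
  · intro f _
    rw [eLpNorm_congr_ae ((Tleft_zero_ae_eq P f).sub (ae_eq_refl _)), sub_self, eLpNorm_zero]
  · intro t ht u hu f hf
    rw [eLpNorm_congr_ae (((hC (t + u) (add_nonneg ht hu)).Tleft_add_ae_eq hρ ht hu hf).sub
      (ae_eq_refl _)), sub_self, eLpNorm_zero]
  · exact fun f hf t ht => tendsto_eLpNorm_Tleft_sub_Tleft hC (by fun_prop) hρ hf ht

end Semigroup

/-- **Proposition 2.2 (a)**.  Let `ρ` be a weight on the directed metric tree `L(G)`,
`M ≥ 1`, `w ∈ ℝ`, and `p = 1`.  The left translations `{T_t}_{t ≥ 0}` form a `C₀`-semigroup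
of bounded operators on `L^1_ρ(L(G))` with `‖T_t‖ ≤ M e^{wt}` for all `t ≥ 0` if and only if
for all `i ∈ I`, all `t ≥ 0` and almost every `s ∈ [0,1]`,
`ρ_i(s) ≤ M e^{wt} inf_{j ∈ M_{n(t,s)}(i)} ρ_j(s + t - n(t,s))`
(the infimum over the empty set being `+∞`). -/
theorem c0SemigroupBound_iff_weight_L1 {I : Type*} [Countable I] [Nonempty I]
    (P : I → Option I) (ρ : I → ℝ → ℝ) (hρ : IsWeight ρ) (M w : ℝ) (hM : 1 ≤ M) :
    C0SemigroupBound P ρ 1 M w ↔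
      ∀ i, ∀ t ≥ (0 : ℝ), ∀ᵐ s ∂(volume.restrict (Set.Icc (0 : ℝ) 1)),
        ENNReal.ofReal (ρ i s) ≤ ENNReal.ofReal (M * Real.exp (w * t)) *
          ⨅ j : Mset P (nfl t s) i, ENNReal.ofReal (ρ (j : I) (s + t - (nfl t s : ℝ))) := by
  have hpos (t : ℝ) : (M * Real.exp (w * t)).toNNReal ≠ 0 :=
    (Real.toNNReal_pos.2 (mul_pos (one_pos.trans_le hM) (Real.exp_pos _))).ne'
  calc C0SemigroupBound P ρ 1 M w
      ↔ ∀ t ≥ 0, WeightBoundedBy P ρ t (M * Real.exp (w * t)).toNNReal :=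
        c0SemigroupBound_one_iff hρ
    _ ↔ ∀ t ≥ 0, ∀ i, ∀ᵐ s ∂unitLebesgue, ENNReal.ofReal (ρ i s) ≤
          ENNReal.ofReal (M * Real.exp (w * t)) *
            ⨅ j : Mset P (nfl t s) i, ENNReal.ofReal (ρ j (s + t - nfl t s)) :=
        forall₂_congr fun t _ => weightBoundedBy_iff_le_iInf (hpos t)
    _ ↔ _ := ⟨fun h i t ht => h t ht i, fun h t ht i => h i t ht⟩

end
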